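/- Every (possibly infinite) word w: S → A in the alphabet A = {e⃗_i, e⃖_i : i ∈ ℕ} (countable totally ordered domain, finite fibers) reduces to a unique reduced word. -/

import Mathlib

open Set

noncomputable section

/-- A *reduction* of a word `w : S → A` over an alphabet `A` with letter-inversion
`inv`: a totally ordered set `R` (here: the linearly ordered index type `ι`) of disjoint
two-element subsets `{fst i, snd i}` of `S` such that the two elements of each pair
`p ∈ R` are adjacent in `S` minus the union of the pairs preceding `p`, and are mapped
by `w` to mutually inverse letters. -/
structure Reduction {S A : Type} [LinearOrder S] (inv : A → A) (w : S → A) where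
  /-- the (linearly ordered) index set of the reduction -/
  ι : Type
  [lin : LinearOrder ι]
  fst : ι → S
  snd : ι → S
  fst_lt_snd : ∀ i, fst i < snd i
  disjoint_pairs : ∀ i j, i ≠ j →
    fst i ≠ fst j ∧ fst i ≠ snd j ∧ snd i ≠ fst j ∧ snd i ≠ snd j
  inv_pair : ∀ i, w (snd i) = inv (w (fst i))
  adjacent : ∀ i, ∀ s : S, fst i < s → s < snd i →
    ∃ j, j < i ∧ (s = fst j ∨ s = snd j)

attribute [instance] Reduction.lin

namespace Reduction

variable {S A : Type} [LinearOrder S] {inv : A → A} {w : S → A}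

/-- The set of positions deleted by a reduction. -/
def deleted (R : Reduction inv w) : Set S := range R.fst ∪ range R.snd

/-- The word to which `w` reduces under the reduction `R`:
the restriction of `w` to the non-deleted positions. -/
def result (R : Reduction inv w) : {s : S // s ∉ R.deleted} → A := fun s => w s.1

end Reduction

/-- A word is *reduced* if it has no nonempty reduction. -/
def Reduced {S A : Type} [LinearOrder S] (inv : A → A) (w : S → A) : Prop :=
  ∀ R : Reduction inv w, IsEmpty R.ι

/-- Two words are the same *abstract word* if there is an order-preserving bijection
between their position sets commuting with the labellings. -/
def WordEquiv {S₁ S₂ A : Type} [LinearOrder S₁] [LinearOrder S₂]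
    (w₁ : S₁ → A) (w₂ : S₂ → A) : Prop :=
  ∃ e : S₁ ≃o S₂, ∀ s, w₂ (e s) = w₁ s

/-- The alphabet `A = {e⃗₀, e⃖₀, e⃗₁, e⃖₁, …}`: the letter `(b, i)` stands for the
oriented chord `e⃗ᵢ` if `b = true`, and for `e⃖ᵢ` if `b = false`. -/
abbrev Letter := Bool × ℕ

/-- The fixed-point-free involution pairing each letter with its inverse. -/
def Letter.inv (a : Letter) : Letter := (!a.1, a.2)

/-- The set of positions of `w` whose letters have index in `I`
(the domain of the restricted word `w↾I`). -/
abbrev restDom {S : Type} (w : S → Letter) (I : Set ℕ) : Type := {s : S // (w s).2 ∈ I}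

/-- The restriction `w↾I` of a word `w` to the letters with index in `I`. -/
def restr {S : Type} (w : S → Letter) (I : Set ℕ) : restDom w I → Letter :=
  fun s => w s.1

/-!
Write a reduction as the involution of `S` that exchanges the two elements of each pair; its arcs
do not cross, and no fixed point lies under an arc. Conversely, the arcs of such an involution can
be listed as a reduction, along any linear extension of the inclusion order of the intervals they
span. Zorn's lemma gives an involution that cannot be extended, and what it leaves is reduced.

For uniqueness, follow the arcs of two such involutions `m` and `m'` alternately. Fibers are finite,
so every fixed point of `m` starts a finite path, which ends in a fixed point of `m` or of `m'`.
Signs along the path show that its ends carry inverse letters in the first case and equal letters in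
the second. Two different paths cannot interleave: modulo 2, the number of pairs `a < b` with `a` on
the first and `b` on the second is unchanged when the points moved by `m`, or those moved by `m'`,
are left out, so it can be computed at the ends. Hence the paths that return to a fixed point of `m`
form a reduction of what `m` leaves, and there are none if that word is reduced. The remaining paths
match the two reduced words, preserving order and letters.
-/

section NoncrossingInvolutions

open Function

/-- An involution of a linear order, seen as the system of arcs from `s` to `m s`, in which no arc
crosses another or passes over a fixed point. -/
structure IsNoncrossing {S : Type*} [LinearOrder S] (m : S → S) : Prop where
  involutive : Involutive m
  nested : ∀ {a s}, a < s → s < m a → m s ≠ s ∧ a < m s ∧ m s < m a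

/-- The set of pairs of a reduction of `w`, encoded as the involution which exchanges the two
elements of each pair and fixes the remaining positions. -/
structure IsCancellation {S A : Type*} [LinearOrder S] (inv : A → A) (w : S → A) (m : S → S) : Prop
    extends IsNoncrossing m where
  label : ∀ {s}, m s ≠ s → w (m s) = inv (w s)

namespace IsNoncrossing

variable {S : Type*} [LinearOrder S] {m : S → S}

lemma lt_apply_iff (hm : IsNoncrossing m) {a s : S} (ha : m a = a) : a < m s ↔ a < s := by
  suffices H : ∀ t, a < t → a < m t from
    ⟨fun h => hm.involutive s ▸ H _ h, H s⟩
  intro t hat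
  by_contra! hta
  have hne : m t ≠ a := fun e => hat.ne' (by rw [← hm.involutive t, e, ha])
  exact (hm.nested (hta.lt_of_ne hne) (by rwa [hm.involutive])).1 ha

lemma apply_lt_iff (hm : IsNoncrossing m) {a s : S} (ha : m a = a) : m s < a ↔ s < a := by
  have hne : m s = a ↔ s = a := by rw [hm.involutive.eq_iff, ha, eq_comm]
  rw [lt_iff_not_ge, lt_iff_not_ge, le_iff_lt_or_eq, le_iff_lt_or_eq, hm.lt_apply_iff ha,
    eq_comm (b := m s), eq_comm (b := s), hne]

end IsNoncrossing

end NoncrossingInvolutions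

section Correspondence

open Function

variable {S A : Type} [LinearOrder S] {inv : A → A} {w : S → A}

/-- The arcs of `m`, represented by their left ends and ordered by inclusion of the intervals
they span. -/
def Arc (m : S → S) : Type := {a : S // a < m a}

instance (m : S → S) : PartialOrder (Arc m) :=
  PartialOrder.lift (β := Sᵒᵈ × S) (fun a => (OrderDual.toDual a.1, m a.1))
    fun _ _ h => Subtype.ext (congrArg Prod.fst h)

/-- The reduction whose pairs are the arcs of `m`. -/
def IsCancellation.reduction {m : S → S} (hm : IsCancellation inv w m) : Reduction inv w where
  ι := LinearExtension (Arc m)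
  fst := fun a : Arc m => a.1
  snd := fun a : Arc m => m a.1
  fst_lt_snd := fun a : Arc m => a.2
  disjoint_pairs := by
    intro (a : Arc m) (b : Arc m) hab
    have hne : a.1 ≠ b.1 := fun e => hab (Subtype.ext e)
    refine ⟨hne, fun e => ?_, fun e => ?_, hm.involutive.injective.ne hne⟩
    · exact a.2.not_gt (by rw [e, hm.involutive]; exact b.2)
    · exact b.2.not_gt (by rw [← e, hm.involutive]; exact a.2)
  inv_pair := fun a : Arc m => hm.label a.2.ne'
  adjacent := by
    intro (a : Arc m) s has hsa
    have earlier (b : Arc m) (hl : a.1 < b.1) (hr : m b.1 < m a.1) :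
        toLinearExtension b < toLinearExtension a :=
      lt_of_le_of_ne (toLinearExtension.monotone ⟨hl.le, hr.le⟩)
        fun e => hl.ne' (congrArg (fun c : Arc m => c.1) e)
    obtain ⟨hne, hl, hr⟩ := hm.nested has hsa
    rcases hne.lt_or_gt with hlt | hlt
    · have hms : m (m s) = s := hm.involutive s
      exact ⟨_, earlier ⟨m s, hlt.trans_eq hms.symm⟩ hl (hms.trans_lt hsa), Or.inr hms.symm⟩
    · exact ⟨_, earlier ⟨s, hlt⟩ has hr, Or.inl rfl⟩

lemma IsCancellation.mem_deleted_reduction {m : S → S} (hm : IsCancellation inv w m) (s : S) :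
    s ∈ hm.reduction.deleted ↔ m s ≠ s := by
  constructor
  · rintro (⟨⟨a, ha⟩, rfl⟩ | ⟨⟨a, ha⟩, rfl⟩)
    · exact ha.ne'
    · exact hm.involutive.injective.ne ha.ne'
  · intro hne
    have hms : m (m s) = s := hm.involutive s
    rcases hne.lt_or_gt with hlt | hlt
    · exact Or.inr ⟨⟨m s, hlt.trans_eq hms.symm⟩, hms⟩
    · exact Or.inl ⟨⟨s, hlt⟩, rfl⟩

namespace Reduction

lemma eq_of_mem_pair (R : Reduction inv w) {i j : R.ι} {s : S} (hi : s = R.fst i ∨ s = R.snd i)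
    (hj : s = R.fst j ∨ s = R.snd j) : i = j := by
  by_contra hij
  have := R.disjoint_pairs i j hij
  grind

lemma fst_ne_snd (R : Reduction inv w) (i j : R.ι) : R.fst i ≠ R.snd j := by
  intro h
  obtain rfl : i = j := R.eq_of_mem_pair (Or.inl rfl) (Or.inr h)
  exact (R.fst_lt_snd i).ne h

lemma fst_injective (R : Reduction inv w) : Injective R.fst :=
  fun _ _ h => R.eq_of_mem_pair (Or.inl rfl) (Or.inl h)

lemma snd_injective (R : Reduction inv w) : Injective R.snd :=
  fun _ _ h => R.eq_of_mem_pair (Or.inr rfl) (Or.inr h)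

lemma notMem_Ioo_of_lt (R : Reduction inv w) {i j : R.ι} (hji : j < i) {s : S}
    (hs : s = R.fst i ∨ s = R.snd i) : s ∉ Ioo (R.fst j) (R.snd j) := by
  rintro ⟨hjs, hsj⟩
  obtain ⟨k, hkj, hk⟩ := R.adjacent j s hjs hsj
  exact (hkj.trans hji).ne (R.eq_of_mem_pair hk hs)

lemma exists_pair_inside (R : Reduction inv w) {i : R.ι} {s : S} (his : R.fst i < s)
    (hsi : s < R.snd i) :
    ∃ j, (s = R.fst j ∨ s = R.snd j) ∧ R.fst i < R.fst j ∧ R.snd j < R.snd i := by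
  obtain ⟨j, hji, hs⟩ := R.adjacent i s his hsi
  have hdisj := R.disjoint_pairs i j hji.ne'
  have hlt := R.fst_lt_snd j
  have hfst := R.notMem_Ioo_of_lt hji (Or.inl rfl)
  have hsnd := R.notMem_Ioo_of_lt hji (Or.inr rfl)
  refine ⟨j, hs, ?_⟩
  rw [mem_Ioo] at hfst hsnd
  grind

/-- The involution which exchanges the two elements of each pair of a reduction and fixes all
positions that are not deleted. -/
def partner (R : Reduction inv w) : S → S := extend R.fst R.snd (extend R.snd R.fst id)

lemma partner_fst (R : Reduction inv w) (i : R.ι) : R.partner (R.fst i) = R.snd i :=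
  R.fst_injective.extend_apply _ _ i

lemma partner_snd (R : Reduction inv w) (i : R.ι) : R.partner (R.snd i) = R.fst i := by
  rw [partner, extend_apply' _ _ _ fun ⟨j, hj⟩ => R.fst_ne_snd j i hj,
    R.snd_injective.extend_apply]

lemma partner_of_notMem (R : Reduction inv w) {s : S} (hs : s ∉ R.deleted) : R.partner s = s := by
  rw [partner, extend_apply' _ _ _ fun h => hs (Or.inl h),
    extend_apply' _ _ _ fun h => hs (Or.inr h), id]

lemma mem_deleted_iff (R : Reduction inv w) (s : S) : s ∈ R.deleted ↔ R.partner s ≠ s := by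
  refine ⟨?_, not_imp_comm.1 R.partner_of_notMem⟩
  rintro (⟨i, rfl⟩ | ⟨i, rfl⟩)
  · rw [partner_fst]
    exact (R.fst_lt_snd i).ne'
  · rw [partner_snd]
    exact (R.fst_lt_snd i).ne

lemma isCancellation_partner (hinv : Involutive inv) (R : Reduction inv w) :
    IsCancellation inv w R.partner where
  involutive s := by
    by_cases hs : s ∈ R.deleted
    · rcases hs with ⟨i, rfl⟩ | ⟨i, rfl⟩ <;> simp only [partner_fst, partner_snd]
    · simp only [R.partner_of_notMem hs]
  nested {a s} has hsa := by
    rcases (R.mem_deleted_iff a).2 (has.trans hsa).ne' with ⟨i, rfl⟩ | ⟨i, rfl⟩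
    · rw [partner_fst] at hsa ⊢
      obtain ⟨j, rfl | rfl, hij, hji⟩ := R.exists_pair_inside has hsa
      · rw [partner_fst]
        exact ⟨(R.fst_lt_snd j).ne', has.trans (R.fst_lt_snd j), hji⟩
      · rw [partner_snd]
        exact ⟨(R.fst_lt_snd j).ne, hij, (R.fst_lt_snd j).trans hsa⟩
    · rw [partner_snd] at hsa
      exact absurd (has.trans hsa) (R.fst_lt_snd i).not_gt
  label {s} hs := by
    rcases (R.mem_deleted_iff s).2 hs with ⟨i, rfl⟩ | ⟨i, rfl⟩
    · rw [partner_fst, R.inv_pair]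
    · rw [partner_snd, R.inv_pair, hinv]

end Reduction

lemma Reduced.apply_eq_self (hw : Reduced inv w) {m : S → S} (hm : IsCancellation inv w m)
    (s : S) : m s = s := by
  by_contra hs
  rcases (hm.mem_deleted_reduction s).2 hs with ⟨i, -⟩ | ⟨i, -⟩ <;>
    exact (hw hm.reduction).false i

lemma reduced_of_forall_apply_eq_self (hinv : Involutive inv)
    (h : ∀ m : S → S, IsCancellation inv w m → ∀ s, m s = s) : Reduced inv w := by
  refine fun R => ⟨fun i => ?_⟩
  have hi := h _ (R.isCancellation_partner hinv) (R.fst i)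
  exact (R.mem_deleted_iff (R.fst i)).1 (Or.inl ⟨i, rfl⟩) hi

end Correspondence

section Existence

open Function

/-- The involution `m'` has all the arcs of `m`. -/
def Extends {S : Type*} (m' m : S → S) : Prop := ∀ s, m s ≠ s → m' s = m s

lemma Extends.trans {S : Type*} {m₁ m₂ m₃ : S → S} (h : Extends m₃ m₂) (h' : Extends m₂ m₁) :
    Extends m₃ m₁ := fun s hs => by
  rw [h s (by rwa [h' s hs]), h' s hs]

lemma exists_extends_chain {S : Type*} {c : Set (S → S)} (hc : IsChain Extends c) :
    ∃ u : S → S, (∀ m ∈ c, Extends u m) ∧ ∀ s, u s ≠ s → ∃ m ∈ c, u s = m s := by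
  have hex (s : S) : ∃ t, (∀ m ∈ c, m s ≠ s → t = m s) ∧ (t ≠ s → ∃ m ∈ c, t = m s) := by
    by_cases h : ∃ m ∈ c, m s ≠ s
    · obtain ⟨m, hm, hms⟩ := h
      refine ⟨m s, fun m' hm' hm's => ?_, fun _ => ⟨m, hm, rfl⟩⟩
      rcases eq_or_ne m m' with rfl | hne
      · rfl
      · exact (hc hm hm' hne).elim (fun h => h s hm's) fun h => (h s hms).symm
    · exact ⟨s, fun m hm hms => absurd ⟨m, hm, hms⟩ h, fun hs => absurd rfl hs⟩
  choose u hu hu' using hex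
  exact ⟨u, fun m hm s => hu s m hm, hu'⟩

variable {S A : Type} [LinearOrder S] {inv : A → A} {w : S → A} {m : S → S}

lemma IsCancellation.of_extends_chain {c : Set (S → S)} (hc : ∀ m ∈ c, IsCancellation inv w m)
    {u : S → S} (hu : ∀ m ∈ c, Extends u m) (hu' : ∀ s, u s ≠ s → ∃ m ∈ c, u s = m s) :
    IsCancellation inv w u where
  involutive s := by
    by_cases hs : u s = s
    · rw [hs, hs]
    · obtain ⟨m, hm, hus⟩ := hu' s hs
      have hms : m (m s) = s := (hc m hm).involutive s
      rw [hus] at hs ⊢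
      rw [hu m hm (m s) (hms.trans_ne (Ne.symm hs)), hms]
  nested {a s} has hsa := by
    obtain ⟨m, hm, hua⟩ := hu' a (has.trans hsa).ne'
    rw [hua] at hsa ⊢
    have hnest := (hc m hm).nested has hsa
    rwa [hu m hm s hnest.1]
  label {s} hs := by
    obtain ⟨m, hm, hus⟩ := hu' s hs
    rw [hus] at hs ⊢
    exact (hc m hm).label hs

lemma exists_maximal_isCancellation (inv : A → A) (w : S → A) :
    ∃ m, IsCancellation inv w m ∧ ∀ m', IsCancellation inv w m' → Extends m' m → Extends m m' := by
  have chain_bounded (c : Set {m // IsCancellation inv w m})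
      (hc : IsChain (fun m m' => Extends m'.1 m.1) c) :
      ∃ u : {m // IsCancellation inv w m}, ∀ m ∈ c, Extends u.1 m.1 := by
    obtain ⟨u, hu, hu'⟩ := exists_extends_chain
      (hc.symm.image_of_map_rel _ Extends Subtype.val fun _ _ h => h)
    have hcanc : IsCancellation inv w u :=
      .of_extends_chain (by rintro _ ⟨m, -, rfl⟩; exact m.2) hu hu'
    exact ⟨⟨u, hcanc⟩, fun m hm => hu _ (mem_image_of_mem _ hm)⟩
  obtain ⟨m, hmax⟩ := exists_maximal_of_chains_bounded chain_bounded
    fun h₁₂ h₂₃ => h₂₃.trans h₁₂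
  exact ⟨m, m.2, fun m' hm' => hmax ⟨m', hm'⟩⟩

lemma IsCancellation.extend_subtype (hm : IsCancellation inv w m) {D : Set S}
    (hD : ∀ s, s ∈ D ↔ m s ≠ s) {k : {s // s ∉ D} → {s // s ∉ D}}
    (hk : IsCancellation inv (fun s : {s // s ∉ D} => w s) k) :
    IsCancellation inv w (extend Subtype.val (fun s => (k s).1) m) := by
  set u := extend Subtype.val (fun s => (k s).1) m
  have u_off (s : {s // s ∉ D}) : u s = k s := Subtype.val_injective.extend_apply _ _ s
  have u_on {s : S} (hs : s ∈ D) : u s = m s :=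
    extend_apply' _ _ _ fun ⟨t, hts⟩ => t.2 (hts ▸ hs)
  have m_on {s : S} (hs : s ∈ D) : m s ∈ D :=
    (hD _).2 (hm.involutive.injective.ne ((hD s).1 hs))
  have m_off (s : {s // s ∉ D}) : m s = s := not_not.1 fun h => s.2 ((hD s).2 h)
  refine { involutive := fun s => ?_, nested := fun {a s} has hsa => ?_, label := fun {s} hs => ?_ }
  · by_cases hs : s ∈ D
    · rw [u_on hs, u_on (m_on hs), hm.involutive]
    · lift s to {s // s ∉ D} using hs
      rw [u_off, u_off, hk.involutive]
  · by_cases ha : a ∈ D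
    · rw [u_on ha] at hsa ⊢
      have hnest := hm.nested has hsa
      rwa [u_on ((hD s).2 hnest.1)]
    · lift a to {s // s ∉ D} using ha
      rw [u_off] at hsa ⊢
      by_cases hs : s ∈ D
      · rw [u_on hs, hm.lt_apply_iff (m_off a), hm.apply_lt_iff (m_off (k a))]
        exact ⟨(hD s).1 hs, has, hsa⟩
      · lift s to {s // s ∉ D} using hs
        rw [u_off]
        obtain ⟨hne, has', hsa'⟩ := hk.nested has hsa
        exact ⟨Subtype.coe_injective.ne hne, has', hsa'⟩
  · by_cases hsD : s ∈ D
    · rw [u_on hsD] at hs ⊢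
      exact hm.label hs
    · lift s to {s // s ∉ D} using hsD
      rw [u_off] at hs ⊢
      exact hk.label (fun e => hs (congrArg Subtype.val e))

theorem exists_reduction_reduced (hinv : Involutive inv) (w : S → A) :
    ∃ R : Reduction inv w, Reduced inv R.result := by
  obtain ⟨m, hm, hmax⟩ := exists_maximal_isCancellation inv w
  refine ⟨hm.reduction, reduced_of_forall_apply_eq_self hinv fun k hk s => ?_⟩
  have hu := hm.extend_subtype hm.mem_deleted_reduction hk
  have hext := hmax _ hu fun t ht =>
    extend_apply' _ _ _ fun ⟨t', e⟩ => t'.2 ((hm.mem_deleted_reduction _).2 (e ▸ ht))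
  by_contra hs
  have hks := hext s
  rw [Subtype.val_injective.extend_apply] at hks
  have hms := hks fun e => hs (Subtype.ext e)
  exact s.2 ((hm.mem_deleted_reduction _).2 (hms ▸ fun e => hs (Subtype.ext e)))

end Existence

section Components

open Function

variable {S : Type*} {m m' : S → S}

/-- The positions reachable from `x` along the arcs of `m` and `m'`. -/
def component (m m' : S → S) (x : S) : Set S :=
  {y | Relation.ReflTransGen (fun s t => t = m s ∨ t = m' s) x y}

lemma mem_component_self (m m' : S → S) (x : S) : x ∈ component m m' x := .refl

lemma mapsTo_left_component (m m' : S → S) (x : S) :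
    MapsTo m (component m m' x) (component m m' x) :=
  fun _ hs => hs.tail (Or.inl rfl)

lemma mapsTo_right_component (m m' : S → S) (x : S) :
    MapsTo m' (component m m' x) (component m m' x) :=
  fun _ hs => hs.tail (Or.inr rfl)

lemma component_subset {x : S} {C : Set S} (hx : x ∈ C) (hC : MapsTo m C C) (hC' : MapsTo m' C C) :
    component m m' x ⊆ C := by
  intro y hy
  induction hy with
  | refl => exact hx
  | tail _ hst hs =>
    rcases hst with rfl | rfl
    exacts [hC hs, hC' hs]

lemma component_comm (m m' : S → S) (x : S) : component m m' x = component m' m x := by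
  simp only [component, or_comm]

lemma component_eq_of_mem (hm : Involutive m) (hm' : Involutive m') {x y : S}
    (hy : y ∈ component m m' x) : component m m' y = component m m' x := by
  have : Std.Symm fun s t => t = m s ∨ t = m' s := ⟨by
    rintro s _ (rfl | rfl)
    exacts [Or.inl (hm s).symm, Or.inr (hm' s).symm]⟩
  ext z
  exact ⟨fun hz => hy.trans hz, fun hz => (symm hy).trans hz⟩

lemma disjoint_component (hm : Involutive m) (hm' : Involutive m') {x y : S}
    (hxy : y ∉ component m m' x) : Disjoint (component m m' x) (component m m' y) := by
  refine disjoint_left.2 fun z hzx hzy => hxy ?_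
  rw [← component_eq_of_mem hm hm' hzx, component_eq_of_mem hm hm' hzy]
  exact mem_component_self m m' y

/-- The sequence `p`, of period `n` (injective if `n = 0`), runs through a component on which `m`
and `m'` act as the reflections `k ↦ -k` and `k ↦ 1 - k` of `ℤ / n`. -/
structure IsDihedralParam (m m' : S → S) (n : ℕ) (p : ℤ → S) : Prop where
  eq_iff : ∀ {i j}, p i = p j ↔ (n : ℤ) ∣ i - j
  left : ∀ k, m (p k) = p (-k)
  right : ∀ k, m' (p k) = p (1 - k)

lemma exists_isDihedralParam (hm : Involutive m) (hm' : Involutive m') {x : S} (hx : m x = x) :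
    ∃ n p, p 0 = x ∧ IsDihedralParam m m' n p := by
  set ρ : Equiv.Perm S := hm.toPerm m
  set σ : Equiv.Perm S := hm'.toPerm m' * ρ
  have hσ (s : S) : σ s = m' (m s) := rfl
  have hconj : SemiconjBy ρ σ σ⁻¹ := Equiv.ext fun s => by
    rw [Equiv.Perm.mul_apply (σ⁻¹), Equiv.Perm.eq_inv_iff_eq]
    change m' (m (m (m' (m s)))) = m s
    rw [hm, hm']
  have hleft (k : ℤ) : m ((σ ^ k) x) = (σ ^ (-k)) x := by
    have h : m ((σ ^ k) x) = (σ⁻¹ ^ k) (m x) := Equiv.congr_fun (hconj.zpow_right k).eq x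
    rw [h, hx, inv_zpow, zpow_neg]
  refine ⟨MulAction.period σ x, fun k => (σ ^ k) x, rfl, ?_, hleft, fun k => ?_⟩
  · intro i j
    rw [← MulAction.zpow_smul_eq_iff_period_dvd, sub_eq_neg_add, zpow_add, zpow_neg, mul_smul,
      inv_smul_eq_iff, Equiv.Perm.smul_def, Equiv.Perm.smul_def]
  · rw [sub_eq_add_neg, zpow_add, zpow_one, Equiv.Perm.mul_apply, ← hleft, hσ, hm]

namespace IsDihedralParam

variable {n : ℕ} {p : ℤ → S}

lemma apply_add_one (hp : IsDihedralParam m m' n p) (k : ℤ) : p (k + 1) = m' (m (p k)) := by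
  rw [hp.left, hp.right, sub_neg_eq_add, add_comm]

lemma component_eq_range (hp : IsDihedralParam m m' n p) : component m m' (p 0) = range p := by
  refine (component_subset (C := range p) ⟨0, rfl⟩ ?_ ?_).antisymm ?_
  · rintro _ ⟨k, rfl⟩
    exact ⟨-k, (hp.left k).symm⟩
  · rintro _ ⟨k, rfl⟩
    exact ⟨1 - k, (hp.right k).symm⟩
  · rintro _ ⟨k, rfl⟩
    induction k with
    | zero => exact mem_component_self m m' _
    | succ k ih =>
      rw [hp.apply_add_one]
      exact mapsTo_right_component m m' _ (mapsTo_left_component m m' _ ih)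
    | pred k ih =>
      have hpred : p (-k - 1) = m (m' (p (-k))) := by
        rw [hp.right, hp.left]
        congr 1
        ring
      rw [hpred]
      exact mapsTo_left_component m m' _ (mapsTo_right_component m m' _ ih)

lemma ne_zero (hp : IsDihedralParam m m' n p) (hfin : (component m m' (p 0)).Finite) : n ≠ 0 := by
  rintro rfl
  refine infinite_range_of_injective (fun i j hij => ?_) (hp.component_eq_range ▸ hfin)
  have := hp.eq_iff.1 hij
  rwa [Nat.cast_zero, zero_dvd_iff, sub_eq_zero] at this

lemma mem_fixedPoints_left (hp : IsDihedralParam m m' n p) {k : ℤ} :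
    p k ∈ fixedPoints m ↔ (n : ℤ) ∣ 2 * k := by
  rw [mem_fixedPoints, IsFixedPt, eq_comm, hp.left, hp.eq_iff, sub_neg_eq_add, two_mul]

lemma mem_fixedPoints_right (hp : IsDihedralParam m m' n p) {k : ℤ} :
    p k ∈ fixedPoints m' ↔ (n : ℤ) ∣ 2 * k - 1 := by
  rw [mem_fixedPoints, IsFixedPt, eq_comm, hp.right, hp.eq_iff]
  ring_nf

end IsDihedralParam

/-- The component of `x` is a path between the distinct fixed points `x` and `y` of `m`; this is
recorded by listing all its fixed points. -/
structure JoinsWithin (m m' : S → S) (x y : S) : Prop where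
  ne : x ≠ y
  fixed_left : component m m' x ∩ fixedPoints m = {x, y}
  fixed_right : component m m' x ∩ fixedPoints m' = ∅

/-- The component of `x` is a path from the fixed point `x` of `m` to the fixed point `y` of `m'`;
this is recorded by listing all its fixed points. -/
structure JoinsAcross (m m' : S → S) (x y : S) : Prop where
  fixed_left : component m m' x ∩ fixedPoints m = {x}
  fixed_right : component m m' x ∩ fixedPoints m' = {y}

namespace IsDihedralParam

variable {n : ℕ} {p : ℤ → S}

lemma joinsWithin {k : ℕ} (hp : IsDihedralParam m m' (2 * k) p) (hk : k ≠ 0) :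
    JoinsWithin m m' (p 0) (p k) where
  ne h := by
    rw [eq_comm, hp.eq_iff, sub_zero, Int.natCast_dvd_natCast] at h
    have := Nat.le_of_dvd (Nat.pos_of_ne_zero hk) h
    omega
  fixed_left := by
    ext z
    rw [hp.component_eq_range]
    constructor
    · rintro ⟨⟨i, rfl⟩, hi⟩
      rw [hp.mem_fixedPoints_left, Nat.cast_mul, Nat.cast_two,
        mul_dvd_mul_iff_left two_ne_zero] at hi
      obtain ⟨c, rfl⟩ := hi
      rcases Int.even_or_odd' c with ⟨d, rfl | rfl⟩
      · exact Or.inl (hp.eq_iff.2 ⟨d, by push_cast; ring⟩)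
      · exact Or.inr (hp.eq_iff.2 ⟨d, by push_cast; ring⟩)
    · rintro (rfl | rfl)
      · exact ⟨⟨0, rfl⟩, hp.mem_fixedPoints_left.2 (by simp)⟩
      · exact ⟨⟨k, rfl⟩, hp.mem_fixedPoints_left.2 (by simp)⟩
  fixed_right := by
    rw [hp.component_eq_range, eq_empty_iff_forall_notMem]
    rintro _ ⟨⟨i, rfl⟩, hi⟩
    rw [hp.mem_fixedPoints_right, Nat.cast_mul, Nat.cast_two] at hi
    have := (dvd_mul_right 2 (k : ℤ)).trans hi
    omega

lemma joinsAcross {k : ℕ} (hp : IsDihedralParam m m' (2 * k + 1) p) :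
    JoinsAcross m m' (p 0) (p (k + 1)) := by
  have hcop : IsCoprime ((2 * k + 1 : ℕ) : ℤ) 2 := ⟨1, -k, by push_cast; ring⟩
  constructor
  · ext z
    rw [hp.component_eq_range]
    constructor
    · rintro ⟨⟨i, rfl⟩, hi⟩
      rw [hp.mem_fixedPoints_left] at hi
      exact hp.eq_iff.2 (by simpa using hcop.dvd_of_dvd_mul_left hi)
    · rintro rfl
      exact ⟨⟨0, rfl⟩, hp.mem_fixedPoints_left.2 (by simp)⟩
  · ext z
    rw [hp.component_eq_range]
    constructor
    · rintro ⟨⟨i, rfl⟩, hi⟩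
      rw [hp.mem_fixedPoints_right] at hi
      refine hp.eq_iff.2 (hcop.dvd_of_dvd_mul_left ?_)
      convert dvd_sub_self_right.2 hi using 1
      push_cast
      ring
    · rintro rfl
      exact ⟨⟨k + 1, rfl⟩, hp.mem_fixedPoints_right.2 ⟨1, by push_cast; ring⟩⟩

end IsDihedralParam

lemma exists_joinsWithin_or_joinsAcross (hm : Involutive m) (hm' : Involutive m') {x : S}
    (hx : m x = x) (hfin : (component m m' x).Finite) :
    (∃ y, JoinsWithin m m' x y) ∨ ∃ y, JoinsAcross m m' x y := by
  obtain ⟨n, p, rfl, hp⟩ := exists_isDihedralParam hm hm' hx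
  have hn := hp.ne_zero hfin
  rcases n.even_or_odd' with ⟨k, rfl | rfl⟩
  · exact Or.inl ⟨_, hp.joinsWithin (right_ne_zero_of_mul hn)⟩
  · exact Or.inr ⟨_, hp.joinsAcross⟩

namespace JoinsWithin

variable {x y z : S}

lemma left_mem (h : JoinsWithin m m' x y) : x ∈ component m m' x ∩ fixedPoints m :=
  h.fixed_left ▸ mem_insert x {y}

lemma right_mem (h : JoinsWithin m m' x y) : y ∈ component m m' x ∩ fixedPoints m :=
  h.fixed_left ▸ mem_insert_of_mem x rfl

lemma symm (hm : Involutive m) (hm' : Involutive m') (h : JoinsWithin m m' x y) :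
    JoinsWithin m m' y x := by
  have hcomp := component_eq_of_mem hm hm' h.right_mem.1
  exact ⟨h.ne.symm, hcomp ▸ h.fixed_left.trans (pair_comm x y), hcomp ▸ h.fixed_right⟩

lemma right_unique (h : JoinsWithin m m' x y) (h' : JoinsWithin m m' x z) : y = z :=
  (h'.fixed_left ▸ h.right_mem : y ∈ ({x, z} : Set S)).resolve_left h.ne.symm

end JoinsWithin

namespace JoinsAcross

variable {x y z : S}

lemma left_mem (h : JoinsAcross m m' x y) : x ∈ component m m' x ∩ fixedPoints m :=
  h.fixed_left ▸ mem_singleton x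

lemma right_mem (h : JoinsAcross m m' x y) : y ∈ component m m' x ∩ fixedPoints m' :=
  h.fixed_right ▸ mem_singleton y

lemma symm (hm : Involutive m) (hm' : Involutive m') (h : JoinsAcross m m' x y) :
    JoinsAcross m' m y x := by
  have hcomp : component m' m y = component m m' x := by
    rw [component_comm, component_eq_of_mem hm hm' h.right_mem.1]
  exact ⟨hcomp ▸ h.fixed_right, hcomp ▸ h.fixed_left⟩

lemma right_unique (h : JoinsAcross m m' x y) (h' : JoinsAcross m m' x z) : y = z :=
  singleton_injective (h.fixed_right.symm.trans h'.fixed_right)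

end JoinsAcross

end Components

section Counting

open Function

variable {S : Type*} {m m' : S → S}

lemma finsum_mem_eq_finsum_mem_fixedPoints {M : Type*} [AddCommMonoid M] (hm : Involutive m)
    {C : Set S} (hfin : C.Finite) (hC : MapsTo m C C) {f : S → M}
    (hf : ∀ s ∈ C, m s ≠ s → f s + f (m s) = 0) :
    ∑ᶠ s ∈ C, f s = ∑ᶠ s ∈ C ∩ fixedPoints m, f s := by
  classical
  lift C to Finset S using hfin
  have hfilter : (C : Set S) ∩ fixedPoints m = ↑(C.filter fun s => m s = s) := by
    rw [Finset.coe_filter]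
    rfl
  rw [hfilter, finsum_mem_coe_finset, finsum_mem_coe_finset,
    ← Finset.sum_filter_add_sum_filter_not C (fun s => m s = s) f]
  have hmoved : ∑ s ∈ C with ¬ m s = s, f s = 0 := by
    refine Finset.sum_involution (fun s _ => m s) (fun s hs => ?_) (fun s hs _ => ?_)
      (fun s hs => ?_) fun s _ => hm s
    · exact hf s (Finset.mem_filter.1 hs).1 (Finset.mem_filter.1 hs).2
    · exact (Finset.mem_filter.1 hs).2
    · have hs' := Finset.mem_filter.1 hs
      exact Finset.mem_filter.2 ⟨hC hs'.1, hm.injective.ne hs'.2⟩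
  rw [hmoved, add_zero]

/-- The indicator of `a < b`, modulo 2. -/
def ltParity [LinearOrder S] (a b : S) : ZMod 2 := if a < b then 1 else 0

variable [LinearOrder S]

namespace IsNoncrossing

lemma ltParity_apply_left (hm : IsNoncrossing m) (a : S) {b : S} (hb : m b = b) :
    ltParity (m a) b = ltParity a b := by
  simp only [ltParity, hm.apply_lt_iff hb]

lemma ltParity_apply_right (hm : IsNoncrossing m) {a : S} (ha : m a = a) (b : S) :
    ltParity a (m b) = ltParity a b := by
  simp only [ltParity, hm.lt_apply_iff ha]

lemma apply_mem_Ioo_iff (hm : IsNoncrossing m) {a c : S} :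
    m a ∈ Ioo c (m c) ↔ a ∈ Ioo c (m c) :=
  ⟨fun h => hm.involutive a ▸ (hm.nested h.1 h.2).2, fun h => (hm.nested h.1 h.2).2⟩

lemma ltParity_add_apply_apply (hm : IsNoncrossing m) {a b : S} (hab : a ≠ b) (hab' : a ≠ m b) :
    ltParity (m a) b + ltParity (m a) (m b) = ltParity a b + ltParity a (m b) := by
  have hne : m a ≠ m b := hm.involutive.injective.ne hab
  have hne' : m a ≠ b := fun e => hab' (by rw [← e, hm.involutive])
  have hunder := hm.apply_mem_Ioo_iff (a := a) (c := b)
  have hunder' := hm.apply_mem_Ioo_iff (a := a) (c := m b)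
  rw [hm.involutive b] at hunder'
  have htwo : (1 : ZMod 2) + 1 = 0 := by decide
  simp only [mem_Ioo] at hunder hunder'
  simp only [ltParity]
  grind

lemma finsum_ltParity_eq (hm : IsNoncrossing m) {C D : Set S} (hCfin : C.Finite) (hDfin : D.Finite)
    (hC : MapsTo m C C) (hD : MapsTo m D D) (hCD : Disjoint C D) :
    ∑ᶠ b ∈ D, ∑ᶠ a ∈ C, ltParity a b =
      ∑ᶠ b ∈ D ∩ fixedPoints m, ∑ᶠ a ∈ C ∩ fixedPoints m, ltParity a b := by
  rw [finsum_mem_eq_finsum_mem_fixedPoints hm.involutive hDfin hD]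
  · refine finsum_mem_congr rfl fun b hb => ?_
    refine finsum_mem_eq_finsum_mem_fixedPoints hm.involutive hCfin hC fun a _ _ => ?_
    rw [hm.ltParity_apply_left a hb.2, CharTwo.add_self_eq_zero]
  · intro b hb _
    rw [← finsum_mem_add_distrib hCfin,
      finsum_mem_eq_finsum_mem_fixedPoints hm.involutive hCfin hC]
    · refine finsum_mem_eq_zero_of_forall_eq_zero fun a ha => ?_
      rw [hm.ltParity_apply_right ha.2, CharTwo.add_self_eq_zero]
    · intro a ha _
      rw [hm.ltParity_add_apply_apply (hCD.ne_of_mem ha hb) (hCD.ne_of_mem ha (hD hb)),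
        CharTwo.add_self_eq_zero]

lemma finsum_ltParity_component_eq (hm : IsNoncrossing m) (hm' : IsNoncrossing m') {x y : S}
    (hx : (component m m' x).Finite) (hy : (component m m' y).Finite)
    (hxy : y ∉ component m m' x) :
    ∑ᶠ b ∈ component m m' y ∩ fixedPoints m, ∑ᶠ a ∈ component m m' x ∩ fixedPoints m,
        ltParity a b =
      ∑ᶠ b ∈ component m m' y ∩ fixedPoints m', ∑ᶠ a ∈ component m m' x ∩ fixedPoints m',
        ltParity a b := by
  have hdisj := disjoint_component hm.involutive hm'.involutive hxy
  rw [← hm.finsum_ltParity_eq hx hy (mapsTo_left_component m m' x) (mapsTo_left_component m m' y)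
      hdisj,
    ← hm'.finsum_ltParity_eq hx hy (mapsTo_right_component m m' x)
      (mapsTo_right_component m m' y) hdisj]

end IsNoncrossing

lemma JoinsWithin.exists_between (hm : IsNoncrossing m) (hm' : IsNoncrossing m')
    (hfin : ∀ z, (component m m' z).Finite) {x y s : S} (h : JoinsWithin m m' x y) (hs : m s = s)
    (hxs : x < s) (hsy : s < y) : ∃ t, JoinsWithin m m' s t ∧ x < t ∧ t < y := by
  have hsx : s ∉ component m m' x := fun hsx => by
    rcases (h.fixed_left ▸ ⟨hsx, hs⟩ : s ∈ ({x, y} : Set S)) with rfl | rfl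
    exacts [hxs.false, hsy.false]
  have hparity := hm.finsum_ltParity_component_eq hm' (hfin x) (hfin s) hsx
  rcases exists_joinsWithin_or_joinsAcross hm.involutive hm'.involutive hs (hfin s) with
    ⟨t, ht⟩ | ⟨t, ht⟩
  · have htx : t ∉ component m m' x := fun htx => hsx <| by
      rw [← component_eq_of_mem hm.involutive hm'.involutive htx]
      exact (ht.symm hm.involutive hm'.involutive).right_mem.1
    rw [ht.fixed_left, ht.fixed_right, h.fixed_left, finsum_mem_empty, finsum_mem_pair ht.ne,
      finsum_mem_pair h.ne, finsum_mem_pair h.ne] at hparity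
    have hyt : t ≠ y := fun e => htx (e ▸ h.right_mem.1)
    refine ⟨t, ht, ?_⟩
    simp only [ltParity] at hparity
    grind
  · rw [ht.fixed_left, ht.fixed_right, h.fixed_left, h.fixed_right, finsum_mem_singleton,
      finsum_mem_singleton, finsum_mem_empty, finsum_mem_pair h.ne, ltParity, ltParity,
      if_pos hxs, if_neg hsy.not_gt] at hparity
    exact absurd hparity (by decide)

lemma JoinsAcross.lt_of_lt (hm : IsNoncrossing m) (hm' : IsNoncrossing m')
    (hfin : ∀ z, (component m m' z).Finite) {x x' y y' : S} (hx : JoinsAcross m m' x x')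
    (hy : JoinsAcross m m' y y') (hxy : x < y) : x' < y' := by
  have hyx : y ∉ component m m' x := fun hyx =>
    hxy.ne' (hx.fixed_left ▸ ⟨hyx, hy.left_mem.2⟩ : y ∈ ({x} : Set S))
  have hparity := hm.finsum_ltParity_component_eq hm' (hfin x) (hfin y) hyx
  simp only [hx.fixed_left, hx.fixed_right, hy.fixed_left, hy.fixed_right, finsum_mem_singleton,
    ltParity, if_pos hxy] at hparity
  by_contra hxy'
  rw [if_neg hxy'] at hparity
  exact one_ne_zero hparity

end Counting

section Labels

open Function

variable {S A : Type*} [LinearOrder S] {inv : A → A} {w : S → A} {m m' : S → S}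

namespace IsCancellation

lemma mapsTo_label (hinv : Involutive inv) (hm : IsCancellation inv w m) (a : A) :
    MapsTo m {s | w s = a ∨ w s = inv a} {s | w s = a ∨ w s = inv a} := by
  intro s hs
  by_cases hms : m s = s
  · rwa [hms]
  · rw [mem_ofPred_eq, hm.label hms, hinv.injective.eq_iff, hinv.eq_iff]
    exact hs.symm

lemma label_of_mem_component (hinv : Involutive inv) (hm : IsCancellation inv w m)
    (hm' : IsCancellation inv w m') {x y : S} (hy : y ∈ component m m' x) :
    w y = w x ∨ w y = inv (w x) :=
  component_subset (C := {s | w s = w x ∨ w s = inv (w x)}) (Or.inl rfl)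
    (hm.mapsTo_label hinv (w x)) (hm'.mapsTo_label hinv (w x)) hy

lemma finite_component (hinv : Involutive inv) (hfib : ∀ a, {s | w s = a}.Finite)
    (hm : IsCancellation inv w m) (hm' : IsCancellation inv w m') (x : S) :
    (component m m' x).Finite :=
  ((hfib (w x)).union (hfib (inv (w x)))).subset fun _ => label_of_mem_component hinv hm hm'

end IsCancellation

open Classical in
/-- The sign of the letter `b` relative to `a`, which tells `a` from its inverse. -/
def relSign (a b : A) : ℤ := if b = a then 1 else -1

lemma relSign_add_relSign_inv {a b : A} (hinv : Involutive inv) (ha : inv a ≠ a)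
    (hb : b = a ∨ b = inv a) : relSign a b + relSign a (inv b) = 0 := by
  rcases hb with rfl | rfl
  · simp [relSign, ha]
  · simp [relSign, ha, hinv a]

namespace IsCancellation

lemma finsum_relSign_eq (hinv : Involutive inv) (hm : IsCancellation inv w m) {C : Set S}
    (hfin : C.Finite) (hC : MapsTo m C C) {a : A} (ha : inv a ≠ a)
    (hw : ∀ s ∈ C, w s = a ∨ w s = inv a) :
    ∑ᶠ s ∈ C, relSign a (w s) = ∑ᶠ s ∈ C ∩ fixedPoints m, relSign a (w s) :=
  finsum_mem_eq_finsum_mem_fixedPoints hm.involutive hfin hC fun s hs hms => by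
    rw [hm.label hms, relSign_add_relSign_inv hinv ha (hw s hs)]

lemma finsum_relSign_component_eq (hinv : Involutive inv) (hm : IsCancellation inv w m)
    (hm' : IsCancellation inv w m') {x : S} (hfin : (component m m' x).Finite)
    (hx : inv (w x) ≠ w x) :
    ∑ᶠ s ∈ component m m' x ∩ fixedPoints m, relSign (w x) (w s) =
      ∑ᶠ s ∈ component m m' x ∩ fixedPoints m', relSign (w x) (w s) := by
  have hw (s : S) := label_of_mem_component hinv hm hm' (x := x) (y := s)
  rw [← hm.finsum_relSign_eq hinv hfin (mapsTo_left_component m m' x) hx hw,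
    ← hm'.finsum_relSign_eq hinv hfin (mapsTo_right_component m m' x) hx hw]

end IsCancellation

lemma JoinsWithin.label (hinv : Involutive inv) (hm : IsCancellation inv w m)
    (hm' : IsCancellation inv w m') {x y : S} (hfin : (component m m' x).Finite)
    (h : JoinsWithin m m' x y) : w y = inv (w x) := by
  have hw := hm.label_of_mem_component hinv hm' h.right_mem.1
  by_cases hx : inv (w x) = w x
  · rwa [hx, or_self, ← hx] at hw
  · refine hw.resolve_left fun hxy => ?_
    have hsum := hm.finsum_relSign_component_eq hinv hm' hfin hx
    rw [h.fixed_left, h.fixed_right, finsum_mem_empty, finsum_mem_pair h.ne, hxy, relSign,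
      if_pos rfl] at hsum
    exact absurd hsum (by decide)

lemma JoinsAcross.label (hinv : Involutive inv) (hm : IsCancellation inv w m)
    (hm' : IsCancellation inv w m') {x y : S} (hfin : (component m m' x).Finite)
    (h : JoinsAcross m m' x y) : w y = w x := by
  have hw := hm.label_of_mem_component hinv hm' h.right_mem.1
  by_cases hx : inv (w x) = w x
  · rwa [hx, or_self] at hw
  · refine hw.resolve_right fun hxy => ?_
    have hsum := hm.finsum_relSign_component_eq hinv hm' hfin hx
    rw [h.fixed_left, h.fixed_right, finsum_mem_singleton, finsum_mem_singleton, hxy, relSign,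
      relSign, if_pos rfl, if_neg hx] at hsum
    exact absurd hsum (by decide)

end Labels

section Uniqueness

open Function

variable {S A : Type} [LinearOrder S] {inv : A → A} {w : S → A}

lemma Reduced.not_joinsWithin (hinv : Involutive inv) (hfib : ∀ a, {s | w s = a}.Finite)
    {m m' : S → S} (hm : IsCancellation inv w m) (hm' : IsCancellation inv w m') {D : Set S}
    (hD : ∀ s, s ∈ D ↔ m s ≠ s) (hred : Reduced inv (fun s : {s // s ∉ D} => w s)) {x y : S} :
    ¬ JoinsWithin m m' x y := by
  have hfin := hm.finite_component hinv hfib hm'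
  have notMem_of_fixed {s : S} (hs : s ∈ fixedPoints m) : s ∉ D := fun h => (hD s).1 h hs
  have hret (s : {s // s ∉ D}) : ∃ t : {s // s ∉ D},
      JoinsWithin m m' s t ∨ t = s ∧ ∀ t, ¬ JoinsWithin m m' s t := by
    by_cases! hs : ∃ t, JoinsWithin m m' s t
    · obtain ⟨t, ht⟩ := hs
      exact ⟨⟨t, notMem_of_fixed ht.right_mem.2⟩, Or.inl ht⟩
    · exact ⟨s, Or.inr ⟨rfl, hs⟩⟩
  choose k hk using hret
  have k_eq {s t : {s // s ∉ D}} (hst : JoinsWithin m m' s t) : k s = t :=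
    Subtype.ext (((hk s).resolve_right fun h => h.2 t hst).right_unique hst)
  have hcanc : IsCancellation inv (fun s : {s // s ∉ D} => w s) k :=
    { involutive s := by
        rcases hk s with hs | ⟨hs, -⟩
        · exact k_eq (hs.symm hm.involutive hm'.involutive)
        · rw [hs, hs]
      nested {a s} has hsa := by
        have ha := (hk a).resolve_right fun h => (has.trans hsa).ne' h.1
        obtain ⟨t, hst, hat, hta⟩ := ha.exists_between hm.toIsNoncrossing hm'.toIsNoncrossing hfin
          (not_not.1 fun h => s.2 ((hD s).2 h)) has hsa
        rw [k_eq (t := ⟨t, notMem_of_fixed hst.right_mem.2⟩) hst]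
        exact ⟨fun e => hst.ne (congrArg Subtype.val e).symm, hat, hta⟩
      label {s} hs := ((hk s).resolve_right fun h => hs h.1).label hinv hm hm' (hfin s) }
  intro h
  have hxy := k_eq (s := ⟨x, notMem_of_fixed h.left_mem.2⟩)
    (t := ⟨y, notMem_of_fixed h.right_mem.2⟩) h
  rw [hred.apply_eq_self hcanc] at hxy
  exact h.ne (congrArg Subtype.val hxy)

lemma Reduction.exists_joinsAcross (hinv : Involutive inv) (hfib : ∀ a, {s | w s = a}.Finite)
    (R R' : Reduction inv w) (hR : Reduced inv R.result) (x : {s // s ∉ R.deleted}) :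
    ∃ y : {s // s ∉ R'.deleted}, JoinsAcross R.partner R'.partner x y := by
  have hm := R.isCancellation_partner hinv
  have hm' := R'.isCancellation_partner hinv
  obtain ⟨y, hy⟩ := (exists_joinsWithin_or_joinsAcross hm.involutive hm'.involutive
    (R.partner_of_notMem x.2) (hm.finite_component hinv hfib hm' x)).resolve_left
    fun ⟨_, h⟩ => hR.not_joinsWithin hinv hfib hm hm' R.mem_deleted_iff h
  exact ⟨⟨y, fun h => (R'.mem_deleted_iff y).1 h hy.right_mem.2⟩, hy⟩

theorem wordEquiv_of_reduced (hinv : Involutive inv) (hfib : ∀ a, {s | w s = a}.Finite)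
    (R R' : Reduction inv w) (hR : Reduced inv R.result) (hR' : Reduced inv R'.result) :
    WordEquiv R.result R'.result := by
  have hm := R.isCancellation_partner hinv
  have hm' := R'.isCancellation_partner hinv
  have hfin := hm.finite_component hinv hfib hm'
  choose f hf using R.exists_joinsAcross hinv hfib R' hR
  have hmono : StrictMono f := fun x y =>
    (hf x).lt_of_lt hm.toIsNoncrossing hm'.toIsNoncrossing hfin (hf y)
  have hsurj : Surjective f := fun y => by
    obtain ⟨x, hyx⟩ := R'.exists_joinsAcross hinv hfib R hR' y
    have hxy := hyx.symm hm'.involutive hm.involutive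
    exact ⟨x, Subtype.ext ((hf x).right_unique hxy)⟩
  exact ⟨hmono.orderIsoOfSurjective f hsurj, fun x => (hf x).label hinv hm hm' (hfin x)⟩

end Uniqueness

lemma Letter.inv_involutive : Function.Involutive Letter.inv := fun a => by
  rw [Letter.inv, Letter.inv, Bool.not_not]

theorem statement12_general {S A : Type} [LinearOrder S] {inv : A → A}
    (hinv : Function.Involutive inv) (w : S → A) (hfib : ∀ a, {s | w s = a}.Finite) :
    (∃ R : Reduction inv w, Reduced inv R.result) ∧
    (∀ R R' : Reduction inv w, Reduced inv R.result → Reduced inv R'.result →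
      WordEquiv R.result R'.result) :=
  ⟨exists_reduction_reduced hinv w, wordEquiv_of_reduced hinv hfib⟩

/-- Lemma `uniquereduced`. Every word `w : S → Letter` in the
alphabet `A = {e⃗ᵢ, e⃖ᵢ : i ∈ ℕ}` (countable totally ordered domain, finite fibers)
reduces to a reduced word, and this reduced word is unique as an abstract word (up to
an order-preserving bijection of the domains commuting with the labellings). -/
theorem statement12 {S : Type} [LinearOrder S] [Countable S]
    (w : S → Letter) (hfib : ∀ a : Letter, {s | w s = a}.Finite) :
    (∃ R : Reduction Letter.inv w, Reduced Letter.inv R.result) ∧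
    (∀ R R' : Reduction Letter.inv w,
      Reduced Letter.inv R.result → Reduced Letter.inv R'.result →
      WordEquiv R.result R'.result) :=
  statement12_general Letter.inv_involutive w hfib
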